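/- (Cousin prime sieve) An odd integer m ≥ 3 is a twin-4 rank (i.e., both 3m-2 and 3m+2 are prime) if and only if there is no prime p ≥ 5 and odd integer j ≥ 1 with m = j·p + 4·N(p/6), and no prime p ≥ 5 and odd integer j ≥ 3 with m = j·p - 4·N(p/6). -/

import Mathlib

/-!
Write a prime `p ≥ 5` as `p = 6k + e` with `e = ±1`; then `N(p/6) = k` (`round_div_six`), so
`12 k = 2p - 2e`. Substituting, `m = jp + 4k` becomes `3m + 2e = p (3j + 2)` and
`m = jp - 4k` becomes `3m - 2e = p (3j - 2)`. The bounds on `j` make the cofactor `3j ± 2`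
exceed `1`, so each representation exhibits `3m - 2` or `3m + 2` as composite.

Conversely `3m - 2` and `3m + 2` are odd and prime to `3`, so if one of them is composite it is
`p q` with `p ≥ 5` prime and `q ≥ 5` prime to `6` (`exists_factor`). The residue of `q` mod `3`
says whether `q = 3j + 2` or `q = 3j - 2`; `j` is odd since `q` is, and the residue of `p` mod `6`
is then the one for which the identities above can be read backwards.
-/

/-- The nearest integer to `p / 6` is `k` when `p = 6k + e` with `|e| ≤ 1`. -/
lemma round_div_six (p k : ℤ) (h1 : 6 * k - 1 ≤ p) (h2 : p ≤ 6 * k + 1) :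
    round ((p : ℚ) / 6) = k := by
  have h1' : (6 * k - 1 : ℚ) ≤ p := by exact_mod_cast h1
  have h2' : (p : ℚ) ≤ 6 * k + 1 := by exact_mod_cast h2
  rw [round_eq, Int.floor_eq_iff]
  constructor <;> linarith

lemma prime_mod_six (p : ℤ) (hp : Prime p) (h5 : 5 ≤ p) : p % 6 = 1 ∨ p % 6 = 5 := by
  have h2 : ¬ (2 : ℤ) ∣ p := fun h => by
    have := (Int.prime_two.dvd_prime_iff_associated hp).1 h
    rw [Int.associated_iff] at this
    omega
  have h3 : ¬ (3 : ℤ) ∣ p := fun h => by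
    have := (Int.prime_three.dvd_prime_iff_associated hp).1 h
    rw [Int.associated_iff] at this
    omega
  omega

lemma not_prime_mul {p q : ℤ} (hp : 2 ≤ p) (hq : 2 ≤ q) : ¬ Prime (p * q) := fun h => by
  rcases h.irreducible.isUnit_or_isUnit rfl with h | h <;>
    rw [Int.isUnit_iff] at h <;> omega

/-- A composite positive integer prime to `6` has a prime factor `p ≥ 5` with cofactor
`q ≥ 5`, and `q` is again prime to `6`. -/
lemma exists_factor (n : ℤ) (hn : 2 ≤ n) (h2 : n % 2 = 1) (h3 : n % 3 ≠ 0) (hnp : ¬ Prime n) :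
    ∃ p q : ℤ, Prime p ∧ 5 ≤ p ∧ 5 ≤ q ∧ q % 2 = 1 ∧ q % 3 ≠ 0 ∧ n = p * q := by
  obtain ⟨p, hp, q, rfl⟩ := Int.exists_prime_and_dvd (n := n) (by omega)
  wlog hpos : 0 ≤ p generalizing p q
  · exact (this (-p) hp.neg (-q) (by simpa using hn) (by simpa using h2) (by simpa using h3)
      (by simpa using hnp) (by omega)).imp fun a ⟨b, h⟩ => ⟨b, by simpa using h⟩
  have key : ∀ d : ℤ, d ∣ p ∨ d ∣ q → d ∣ p * q := fun d h =>
    h.elim (fun h => h.mul_right q) (fun h => h.mul_left p)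
  have k2 := key 2
  have k3 := key 3
  have hp0 : p ≠ 0 := hp.ne_zero
  have hp1 : p ≠ 1 := hp.ne_one
  have hq : 0 < q := by
    by_contra! h
    nlinarith
  have hq1 : q ≠ 1 := by
    rintro rfl
    exact hnp (by simpa using hp)
  exact ⟨p, q, hp, by omega, by omega, by omega, by omega, rfl⟩

theorem cousin_prime_sieve (m : ℤ) (hodd : Odd m) (h3 : 3 ≤ m) :
    (Prime (3 * m - 2) ∧ Prime (3 * m + 2)) ↔
      (¬∃ p j : ℤ, Prime p ∧ 5 ≤ p ∧ Odd j ∧ 1 ≤ j ∧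
          m = j * p + 4 * round ((p : ℚ) / 6)) ∧
      (¬∃ p j : ℤ, Prime p ∧ 5 ≤ p ∧ Odd j ∧ 3 ≤ j ∧
          m = j * p - 4 * round ((p : ℚ) / 6)) := by
  constructor
  · rintro ⟨ha, hb⟩
    constructor
    · rintro ⟨p, j, hp, h5, -, hj, hm⟩
      rcases prime_mod_six p hp h5 with h | h
      · rw [round_div_six p (p / 6) (by omega) (by omega)] at hm
        have e : 3 * m + 2 = p * (3 * j + 2) := by
          have : p = 6 * (p / 6) + 1 := by omega
          linear_combination 3 * hm - 2 * this
        exact not_prime_mul (by omega) (by omega) (e ▸ hb)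
      · rw [round_div_six p (p / 6 + 1) (by omega) (by omega)] at hm
        have e : 3 * m - 2 = p * (3 * j + 2) := by
          have : p = 6 * (p / 6) + 5 := by omega
          linear_combination 3 * hm - 2 * this
        exact not_prime_mul (by omega) (by omega) (e ▸ ha)
    · rintro ⟨p, j, hp, h5, -, hj, hm⟩
      rcases prime_mod_six p hp h5 with h | h
      · rw [round_div_six p (p / 6) (by omega) (by omega)] at hm
        have e : 3 * m - 2 = p * (3 * j - 2) := by
          have : p = 6 * (p / 6) + 1 := by omega
          linear_combination 3 * hm + 2 * this
        exact not_prime_mul (by omega) (by omega) (e ▸ ha)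
      · rw [round_div_six p (p / 6 + 1) (by omega) (by omega)] at hm
        have e : 3 * m + 2 = p * (3 * j - 2) := by
          have : p = 6 * (p / 6) + 5 := by omega
          linear_combination 3 * hm + 2 * this
        exact not_prime_mul (by omega) (by omega) (e ▸ hb)
  · rintro ⟨hA, hB⟩
    rw [Int.odd_iff] at hodd
    -- `s = ±1` treats `3m - 2` and `3m + 2` together.
    have main : ∀ s : ℤ, s = 1 ∨ s = -1 → Prime (3 * m + 2 * s) := by
      intro s hs
      by_contra hnp
      obtain ⟨p, q, hp, h5, hq5, hq2, hq3, e⟩ :=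
        exists_factor (3 * m + 2 * s) (by omega) (by omega) (by omega) hnp
      have hmod : (p % 3) * (q % 3) % 3 = (2 * s) % 3 := by
        rw [← Int.mul_emod, ← e]
        omega
      have hp6 := prime_mod_six p hp h5
      have hq : q % 3 = 1 ∨ q % 3 = 2 := by omega
      rcases hq with hq | hq
      · -- Here `q = 3j - 2` and `p = 6k - s`.
        rw [hq] at hmod
        obtain ⟨j, rfl⟩ : ∃ j, q = 3 * j - 2 := ⟨(q + 2) / 3, by omega⟩
        obtain ⟨k, rfl⟩ : ∃ k, p = 6 * k - s := ⟨(p + s) / 6, by omega⟩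
        refine hB ⟨6 * k - s, j, hp, h5, Int.odd_iff.2 (by omega), by omega, ?_⟩
        rw [round_div_six _ k (by omega) (by omega)]
        linarith
      · -- Here `q = 3j + 2` and `p = 6k + s`.
        rw [hq] at hmod
        obtain ⟨j, rfl⟩ : ∃ j, q = 3 * j + 2 := ⟨(q - 2) / 3, by omega⟩
        obtain ⟨k, rfl⟩ : ∃ k, p = 6 * k + s := ⟨(p - s) / 6, by omega⟩
        refine hA ⟨6 * k + s, j, hp, h5, Int.odd_iff.2 (by omega), by omega, ?_⟩
        rw [round_div_six _ k (by omega) (by omega)]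
        linarith
    exact ⟨by simpa [sub_eq_add_neg] using main (-1) (by simp), by simpa using main 1 (by simp)⟩
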